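/- Let Y, H, S be random variables on a probability space (Ω, μ) taking values in finite nonempty types (with the discrete σ-algebra, all maps measurable). Then the Bayes error of predicting Y from the pair satisfies 1 − ∑_{(h,s)} max_y μ(H = h ∧ S = s ∧ Y = y) ≤ (1/2) · min (H₂[Y | H]) (H₂[Y | S]), where H₂ denotes conditional Shannon entropy with logarithm base 2. -/

import Mathlib

open MeasureTheory

/-- Base-2 Shannon entropy of a random variable `X` with values in a finite type,
with the convention `0 * log 0 = 0` (which holds since `Real.logb 2 0 = 0`). -/
noncomputable def ent2 {Ω α : Type*} [MeasurableSpace Ω] [Fintype α]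
    (μ : Measure Ω) (X : Ω → α) : ℝ :=
  -∑ x : α, (μ (X ⁻¹' {x})).toReal * Real.logb 2 (μ (X ⁻¹' {x})).toReal

/-- Base-2 conditional entropy `H₂[Y | X] = H₂[⟨Y,X⟩] - H₂[X]`. -/
noncomputable def condEnt2 {Ω α β : Type*} [MeasurableSpace Ω] [Fintype α] [Fintype β]
    (μ : Measure Ω) (Y : Ω → α) (X : Ω → β) : ℝ :=
  ent2 μ (fun ω => (Y ω, X ω)) - ent2 μ X

/-!
Merging two atoms of masses `a` and `b` lowers the entropy by `(a + b) h(a / (a + b))`, where `h` is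
the binary entropy, and concavity of `h` bounds this below by `2 min(a, b)` bits. Merging the atoms
of a finite distribution one at a time, the smaller masses add up to at least the total mass minus
one of the atoms, so the entropy is at least twice the Bayes error. Summing over the values of `X`
bounds the Bayes error given `X` by half of `H₂[Y | X]`, and observing `⟨H, S⟩` is at least as good
as observing its image `H` or `S`.
-/

open Real (binEntropy log negMulLog)

theorem two_mul_log_two_mul_min_le_binEntropy {p : ℝ} (hp₀ : 0 ≤ p) (hp₁ : p ≤ 1) :
    2 * log 2 * min p (1 - p) ≤ binEntropy p := by
  wlog hp : p ≤ 1 / 2 generalizing p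
  · have h := this (p := 1 - p) (by linarith) (by linarith) (by linarith)
    rwa [Real.binEntropy_one_sub, sub_sub_cancel, min_comm] at h
  have chord := Real.strictConcave_binEntropy.concaveOn.2
    (show (2⁻¹ : ℝ) ∈ Set.Icc 0 1 by norm_num) (show (0 : ℝ) ∈ Set.Icc 0 1 by norm_num)
    (show 0 ≤ 2 * p by linarith) (show 0 ≤ 1 - 2 * p by linarith) (by ring)
  calc 2 * log 2 * min p (1 - p)
      ≤ 2 * p * binEntropy 2⁻¹ + (1 - 2 * p) * binEntropy 0 := by
        rw [min_eq_left (by linarith), Real.binEntropy_two_inv, Real.binEntropy_zero]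
        linarith
    _ ≤ binEntropy (2 * p * 2⁻¹ + (1 - 2 * p) * 0) := chord
    _ = binEntropy p := by ring_nf

theorem negMulLog_add_negMulLog_sub_negMulLog_add {a b : ℝ} (hab : a + b ≠ 0) :
    negMulLog a + negMulLog b - negMulLog (a + b) = (a + b) * binEntropy (a / (a + b)) := by
  have ha : negMulLog a = negMulLog ((a + b) * (a / (a + b))) := by rw [mul_div_cancel₀ _ hab]
  have hb : negMulLog b = negMulLog ((a + b) * (1 - a / (a + b))) := by
    rw [mul_sub, mul_div_cancel₀ _ hab, mul_one, add_sub_cancel_left]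
  rw [ha, hb, Real.negMulLog_mul, Real.negMulLog_mul,
    Real.binEntropy_eq_negMulLog_add_negMulLog_one_sub]
  ring

theorem two_mul_log_two_mul_min_le_negMulLog_add_sub {a b : ℝ} (ha : 0 ≤ a) (hb : 0 ≤ b) :
    2 * log 2 * min a b ≤ negMulLog a + negMulLog b - negMulLog (a + b) := by
  rcases (add_nonneg ha hb).eq_or_lt with hab | hab
  · obtain ⟨rfl, rfl⟩ := (add_eq_zero_iff_of_nonneg ha hb).1 hab.symm
    simp
  have hmin : min a b = (a + b) * min (a / (a + b)) (1 - a / (a + b)) := by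
    rw [mul_min_of_nonneg _ _ hab.le, mul_sub, mul_div_cancel₀ _ hab.ne', mul_one,
      add_sub_cancel_left]
  rw [negMulLog_add_negMulLog_sub_negMulLog_add hab.ne', hmin, mul_left_comm]
  gcongr
  exact two_mul_log_two_mul_min_le_binEntropy (by positivity)
    (div_le_one_of_le₀ (by linarith) hab.le)

theorem exists_two_mul_log_two_mul_sum_sub_le_sum_negMulLog {ι : Type*} {s : Finset ι}
    (hs : s.Nonempty) {q : ι → ℝ} (hq : ∀ i ∈ s, 0 ≤ q i) :
    ∃ i ∈ s, 2 * log 2 * (∑ j ∈ s, q j - q i) ≤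
      ∑ j ∈ s, negMulLog (q j) - negMulLog (∑ j ∈ s, q j) := by
  induction hs using Finset.Nonempty.cons_induction with
  | singleton a => exact ⟨a, by simp⟩
  | cons a s has _ ih =>
    rw [Finset.forall_mem_cons] at hq
    obtain ⟨i, his, hi⟩ := ih hq.2
    have merge := two_mul_log_two_mul_min_le_negMulLog_add_sub hq.1 (Finset.sum_nonneg hq.2)
    simp only [Finset.sum_cons]
    rcases le_total (q a) (∑ j ∈ s, q j) with ha | ha
    · rw [min_eq_left ha] at merge
      exact ⟨i, Finset.mem_cons_of_mem his, by linarith⟩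
    · rw [min_eq_right ha] at merge
      have rest_nonneg : 0 ≤ 2 * log 2 * (∑ j ∈ s, q j - q i) :=
        mul_nonneg (by positivity) (sub_nonneg.2 (Finset.single_le_sum hq.2 his))
      exact ⟨a, Finset.mem_cons_self a s, by linarith⟩

theorem two_mul_log_two_mul_sum_sub_iSup_le_sum_negMulLog {ι : Type*} [Fintype ι] [Nonempty ι]
    {q : ι → ℝ} (hq : ∀ i, 0 ≤ q i) :
    2 * log 2 * (∑ i, q i - ⨆ i, q i) ≤ ∑ i, negMulLog (q i) - negMulLog (∑ i, q i) := by
  obtain ⟨i, -, hi⟩ := exists_two_mul_log_two_mul_sum_sub_le_sum_negMulLog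
    Finset.univ_nonempty fun i _ => hq i
  refine le_trans ?_ hi
  gcongr
  exact le_ciSup (Set.finite_range q).bddAbove i

theorem prodMk_preimage_singleton {Ω α β : Type*} (X : Ω → α) (Y : Ω → β) (p : α × β) :
    (fun ω => (X ω, Y ω)) ⁻¹' {p} = X ⁻¹' {p.1} ∩ Y ⁻¹' {p.2} := by
  rw [← Set.mk_preimage_prod, Set.singleton_prod_singleton]

section BayesError

variable {Ω α γ : Type*} [MeasurableSpace Ω] {μ : Measure Ω}

theorem sum_measureReal_preimage_singleton_inter [MeasurableSpace α] [MeasurableSingletonClass α]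
    [IsFiniteMeasure μ] {X : Ω → α} (hX : Measurable X) (s : Finset α) (A : Set Ω) :
    ∑ x ∈ s, μ.real (X ⁻¹' {x} ∩ A) = μ.real (X ⁻¹' s ∩ A) := by
  have hfiber (x : α) : MeasurableSet (X ⁻¹' {x}) := hX (measurableSet_singleton x)
  simpa only [measureReal_restrict_apply (hfiber _),
    measureReal_restrict_apply (hX s.measurableSet)] using
    sum_measureReal_preimage_singleton (μ := μ.restrict A) s fun x _ => hfiber x

theorem ent2_eq_sum_negMulLog_div [Fintype α] (X : Ω → α) :
    ent2 μ X = (∑ x, negMulLog (μ.real (X ⁻¹' {x}))) / log 2 := by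
  simp only [ent2, Real.logb, negMulLog, measureReal_def, Finset.sum_div, ← Finset.sum_neg_distrib,
    mul_div_assoc, neg_mul, neg_div]

variable [Fintype α]

theorem condEnt2_eq_sum_negMulLog_div [Fintype γ] (Y : Ω → γ) (X : Ω → α) :
    condEnt2 μ Y X = (∑ x, (∑ y, negMulLog (μ.real (X ⁻¹' {x} ∩ Y ⁻¹' {y})) -
      negMulLog (μ.real (X ⁻¹' {x})))) / log 2 := by
  simp only [condEnt2, ent2_eq_sum_negMulLog_div, Fintype.sum_prod_type_right,
    prodMk_preimage_singleton, Set.inter_comm (Y ⁻¹' _), Finset.sum_sub_distrib, sub_div]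

/-- The Bayes error of predicting `Y` from `X`: the error probability of the predictor that guesses
a most likely value of `Y` given the observed value of `X`. The `1` stands for the total mass of
`μ`, which should therefore be a probability measure. -/
noncomputable def bayesError (μ : Measure Ω) (Y : Ω → γ) (X : Ω → α) : ℝ :=
  1 - ∑ x, ⨆ y, μ.real (X ⁻¹' {x} ∩ Y ⁻¹' {y})

theorem bayesError_le_bayesError_comp {β : Type*} [Fintype β] [Finite γ] [MeasurableSpace α]
    [MeasurableSingletonClass α] [IsFiniteMeasure μ] (Y : Ω → γ) {X : Ω → α} (hX : Measurable X)
    (f : α → β) : bayesError μ Y X ≤ bayesError μ Y (f ∘ X) := by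
  classical
  refine sub_le_sub_left ?_ 1
  rw [← Finset.sum_fiberwise Finset.univ f]
  refine Finset.sum_le_sum fun b _ => Real.iSup_le (fun y => ?_)
    (Finset.sum_nonneg fun x _ => Real.iSup_nonneg fun y => measureReal_nonneg)
  have hfiber : (f ∘ X) ⁻¹' {b} = X ⁻¹' ↑({x | f x = b} : Finset α) := by
    ext ω
    simp
  rw [hfiber, ← sum_measureReal_preimage_singleton_inter hX]
  exact Finset.sum_le_sum fun x _ =>
    le_ciSup (f := fun y => μ.real (X ⁻¹' {x} ∩ Y ⁻¹' {y})) (Set.finite_range _).bddAbove y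

theorem bayesError_le_half_condEnt2 [MeasurableSpace α] [MeasurableSingletonClass α]
    [Fintype γ] [MeasurableSpace γ] [MeasurableSingletonClass γ] [IsProbabilityMeasure μ]
    {Y : Ω → γ} (hY : Measurable Y) {X : Ω → α} (hX : Measurable X) :
    bayesError μ Y X ≤ 1 / 2 * condEnt2 μ Y X := by
  have : Nonempty γ := μ.nonempty_of_neZero.map Y
  have sum_X : ∑ x, μ.real (X ⁻¹' {x}) = 1 := by
    simpa using sum_measureReal_preimage_singleton_inter (μ := μ) hX Finset.univ Set.univ
  have sum_Y (x : α) : ∑ y, μ.real (X ⁻¹' {x} ∩ Y ⁻¹' {y}) = μ.real (X ⁻¹' {x}) := by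
    simpa [Set.inter_comm] using
      sum_measureReal_preimage_singleton_inter (μ := μ) hY Finset.univ (X ⁻¹' {x})
  have fiberwise (x : α) :
      2 * log 2 * (μ.real (X ⁻¹' {x}) - ⨆ y, μ.real (X ⁻¹' {x} ∩ Y ⁻¹' {y})) ≤
        ∑ y, negMulLog (μ.real (X ⁻¹' {x} ∩ Y ⁻¹' {y})) - negMulLog (μ.real (X ⁻¹' {x})) := by
    simpa only [sum_Y] using two_mul_log_two_mul_sum_sub_iSup_le_sum_negMulLog
      (q := fun y => μ.real (X ⁻¹' {x} ∩ Y ⁻¹' {y})) fun y => measureReal_nonneg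
  have total : 2 * log 2 * bayesError μ Y X ≤ condEnt2 μ Y X * log 2 := by
    rw [condEnt2_eq_sum_negMulLog_div, div_mul_cancel₀ _ (Real.log_pos one_lt_two).ne', bayesError,
      ← sum_X, ← Finset.sum_sub_distrib, Finset.mul_sum]
    exact Finset.sum_le_sum fun x _ => fiberwise x
  have : 2 * bayesError μ Y X ≤ condEnt2 μ Y X :=
    le_of_mul_le_mul_right (by linarith) (Real.log_pos one_lt_two)
  linarith

end BayesError

/-- Corollary 1: the Bayes error of predicting `Y` from the pair `⟨H,S⟩` is at most half
the minimum of the base-2 conditional entropies `H₂[Y | H]` and `H₂[Y | S]`. -/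
theorem bayesError_pair_le_half_min_condEnt2 {Ω α β γ : Type*} [MeasurableSpace Ω]
    [Fintype α] [Nonempty α] [MeasurableSpace α] [DiscreteMeasurableSpace α]
    [Fintype β] [Nonempty β] [MeasurableSpace β] [DiscreteMeasurableSpace β]
    [Fintype γ] [Nonempty γ] [MeasurableSpace γ] [DiscreteMeasurableSpace γ]
    (μ : Measure Ω) [IsProbabilityMeasure μ]
    (Y : Ω → γ) (H : Ω → α) (S : Ω → β)
    (hY : Measurable Y) (hH : Measurable H) (hS : Measurable S) :
    1 - ∑ p : α × β, ⨆ y : γ,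
        (μ (H ⁻¹' {p.1} ∩ S ⁻¹' {p.2} ∩ Y ⁻¹' {y})).toReal
      ≤ (1 / 2) * min (condEnt2 μ Y H) (condEnt2 μ Y S) := by
  have bayesError_pair : 1 - ∑ p : α × β, ⨆ y : γ,
      (μ (H ⁻¹' {p.1} ∩ S ⁻¹' {p.2} ∩ Y ⁻¹' {y})).toReal =
        bayesError μ Y fun ω => (H ω, S ω) := by
    simp only [bayesError, prodMk_preimage_singleton, measureReal_def]
  have hHS : Measurable fun ω => (H ω, S ω) := hH.prodMk hS
  rw [bayesError_pair, mul_min_of_nonneg _ _ one_half_pos.le]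
  exact le_min
    ((bayesError_le_bayesError_comp Y hHS Prod.fst).trans (bayesError_le_half_condEnt2 hY hH))
    ((bayesError_le_bayesError_comp Y hHS Prod.snd).trans (bayesError_le_half_condEnt2 hY hS))
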